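/- arXiv:2002.02863 — 2 statements merged into one kernel-verified Lean document; each statement's English description precedes it below -/
import Mathlib

section
/- Let n be a positive natural number, let P and P′ be n×n real matrices, and let ρ and ρ′ be vectors in ℝⁿ (regarded as row vectors) satisfying the stationarity conditions ρᵀP = ρᵀ and ρ′ᵀP′ = ρ′ᵀ, together with the normalizations ∑_i ρ_i = 1 and ∑_i ρ′_i = 1. Let E = P′ − P, let 𝟙 denote the all-ones column vector in ℝⁿ, and suppose the matrix I − P + 𝟙ρᵀ is invertible with inverse Z. Then ρ′ᵀ − ρᵀ = ρ′ᵀ E Z. -/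
/-- Stationary-distribution perturbation identity (Schweitzer): if `ρᵀP = ρᵀ`, `ρ′ᵀP′ = ρ′ᵀ`,
both normalized to sum 1, `E = P′ − P`, and `Z` is the inverse of the fundamental matrix
`I − P + 𝟙ρᵀ`, then `ρ′ᵀ − ρᵀ = ρ′ᵀ E Z`. -/
theorem stmt_5 (n : ℕ) (hn : 0 < n) (P P' : Matrix (Fin n) (Fin n) ℝ)
    (ρ ρ' : Fin n → ℝ)
    (hρ : Matrix.vecMul ρ P = ρ) (hρ' : Matrix.vecMul ρ' P' = ρ')
    (hρsum : ∑ i, ρ i = 1) (hρ'sum : ∑ i, ρ' i = 1)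
    (Z : Matrix (Fin n) (Fin n) ℝ)
    (hZ : (1 - P + Matrix.of fun _ j => ρ j) * Z = 1)
    (hZ' : Z * (1 - P + Matrix.of fun _ j => ρ j) = 1) :
    (fun i => ρ' i - ρ i) = Matrix.vecMul (Matrix.vecMul ρ' (P' - P)) Z := by
  have key : ∀ v : Fin n → ℝ, ∑ i, v i = 1 →
      Matrix.vecMul v (Matrix.of fun (_ : Fin n) j => ρ j) = ρ := by
    intro v hv
    funext j
    simp only [Matrix.vecMul, dotProduct, Matrix.of_apply]
    rw [← Finset.sum_mul, hv, one_mul]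
  have h : Matrix.vecMul ρ' (P' - P)
      = Matrix.vecMul (ρ' - ρ) (1 - P + Matrix.of fun _ j => ρ j) := by
    rw [Matrix.sub_vecMul, Matrix.vecMul_add, Matrix.vecMul_add, key ρ' hρ'sum, key ρ hρsum,
      Matrix.vecMul_sub, Matrix.vecMul_sub, Matrix.vecMul_sub, hρ, hρ', Matrix.vecMul_one,
      Matrix.vecMul_one]
    abel
  rw [h, Matrix.vecMul_vecMul, hZ, Matrix.vecMul_one]
  rfl
end

section
/- Let n be a positive natural number, let P and P′ be n×n real matrices, and let ρ and ρ′ be vectors in ℝⁿ (regarded as row vectors) satisfying the stationarity conditions ρᵀP = ρᵀ and ρ′ᵀP′ = ρ′ᵀ, together with the normalizations ∑_i ρ_i = 1 and ∑_i ρ′_i = 1, and assume additionally that every entry of ρ′ is nonnegative. Let E = P′ − P, let 𝟙 denote the all-ones column vector in ℝⁿ, and suppose the matrix I − P + 𝟙ρᵀ is invertible with inverse Z. Then ‖ρ − ρ′‖₂ ≤ ‖E‖ · ‖Z‖, where ‖·‖₂ is the Euclidean norm on ℝⁿ and ‖·‖ denotes the ℓ²→ℓ² operator norm on n×n matrices.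 -/
/-- Approximate policy coverage bound (Theorem 4, norm form): under the stationarity,
normalization and nonnegativity assumptions, with `E = P′ − P` and `Z` the inverse of the
fundamental matrix `I − P + 𝟙ρᵀ`, the Euclidean distance between the stationary distributions
is bounded by the product of the ℓ²→ℓ² operator norms of `E` and `Z`. -/
theorem stmt_6 (n : ℕ) (hn : 0 < n) (P P' : Matrix (Fin n) (Fin n) ℝ)
    (ρ ρ' : EuclideanSpace ℝ (Fin n))
    (hρ : Matrix.vecMul (ρ : Fin n → ℝ) P = ρ)
    (hρ' : Matrix.vecMul (ρ' : Fin n → ℝ) P' = ρ')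
    (hρsum : ∑ i, ρ i = 1) (hρ'sum : ∑ i, ρ' i = 1)
    (hρ'nonneg : ∀ i, 0 ≤ ρ' i)
    (Z : Matrix (Fin n) (Fin n) ℝ)
    (hZ : (1 - P + Matrix.of fun _ j => ρ j) * Z = 1)
    (hZ' : Z * (1 - P + Matrix.of fun _ j => ρ j) = 1) :
    ‖ρ - ρ'‖ ≤
      ‖Matrix.toEuclideanCLM (𝕜 := ℝ) (P' - P)‖ * ‖Matrix.toEuclideanCLM (𝕜 := ℝ) Z‖ := by
  have hM : Matrix.vecMul ((ρ' : Fin n → ℝ) - (ρ : Fin n → ℝ))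
      (1 - P + Matrix.of fun _ j => ρ j) = Matrix.vecMul (ρ' : Fin n → ℝ) (P' - P) := by
    have h0 : Matrix.vecMul ((ρ' : Fin n → ℝ) - (ρ : Fin n → ℝ))
        (Matrix.of fun _ j => ρ j) = 0 := by
      ext j
      simp only [Matrix.vecMul, dotProduct, Matrix.of_apply, Pi.sub_apply, Pi.zero_apply]
      rw [← Finset.sum_mul, Finset.sum_sub_distrib, hρsum, hρ'sum]
      simp
    rw [Matrix.vecMul_add, h0, Matrix.vecMul_sub, Matrix.vecMul_sub, hρ', Matrix.vecMul_one,
      Matrix.sub_vecMul, hρ]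
    abel
  have hd : (ρ' : Fin n → ℝ) - (ρ : Fin n → ℝ)
      = Matrix.mulVec (((P' - P) * Z).conjTranspose) (ρ' : Fin n → ℝ) := by
    have h1 := congrArg (fun v => Matrix.vecMul v Z) hM
    simp only [Matrix.vecMul_vecMul, hZ, Matrix.vecMul_one] at h1
    rw [h1, Matrix.conjTranspose_eq_transpose_of_trivial, Matrix.mulVec_transpose]
  have hd' : ρ' - ρ = Matrix.toEuclideanCLM (𝕜 := ℝ) (((P' - P) * Z).conjTranspose) ρ' := by
    apply WithLp.ofLp_injective
    rw [Matrix.ofLp_toEuclideanCLM, ← hd]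
    rfl
  have hone : ‖ρ'‖ ≤ 1 := by
    have hle : ∀ i, ρ' i ≤ 1 := fun i => by
      rw [← hρ'sum]
      exact Finset.single_le_sum (fun j _ => hρ'nonneg j) (Finset.mem_univ i)
    have hsq : ‖ρ'‖ ^ 2 ≤ 1 := by
      rw [EuclideanSpace.real_norm_sq_eq, ← hρ'sum]
      exact Finset.sum_le_sum fun i _ => by nlinarith [hle i, hρ'nonneg i]
    nlinarith [norm_nonneg ρ']
  rw [norm_sub_rev, hd']
  refine (ContinuousLinearMap.le_opNorm _ _).trans ?_
  refine (mul_le_of_le_one_right (norm_nonneg _) hone).trans ?_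
  rw [← Matrix.star_eq_conjTranspose, map_star, ContinuousLinearMap.star_eq_adjoint,
    LinearIsometryEquiv.norm_map, map_mul]
  exact norm_mul_le _ _
end
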